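/- arXiv:math/0606007 — 3 statements merged into one kernel-verified Lean document; each statement's English description precedes it below -/
import Mathlib

section
/- (Wienholtz: interleaved bitangent support planes) Let d ≥ 3 and let γ : ℝ/ℤ → ℝ^d be a continuous closed curve. Then there exist a unit vector v ∈ ℝ^d and parameters t₁ < t₂ < t₃ < t₄ in [0,1) such that ⟨γ(t₁), v⟩ = ⟨γ(t₃), v⟩ = max_{t} ⟨γ(t), v⟩ and ⟨γ(t₂), v⟩ = ⟨γ(t₄), v⟩ = min_{t} ⟨γ(t), v⟩. That is, γ admits a pair of parallel interleaved bitangent support hyperplanes: two parallel hyperplanes bounding a slab containing γ, each touching γ in two points, with the four touch points interleaved along γ. -/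
open Set Filter MeasureTheory
open scoped ENNReal NNReal RealInnerProductSpace

noncomputable section

/-- The parameters `u 0 < u 1 < ⋯ < u m` of a polygon inscribed in (the restriction to
`[a,b]` of) a curve: strictly increasing parameters lying in `[a,b]`. -/
def InscribedIn (a b : ℝ) (m : ℕ) (u : ℕ → ℝ) : Prop :=
  (∀ i < m, u i < u (i + 1)) ∧ ∀ i ≤ m, u i ∈ Set.Icc a b

/-- The length of the polygon inscribed in the curve `γ` with parameters `u 0, …, u m`:
the sum of the euclidean lengths of its edges. -/
def polyLen {E : Type*} [NormedAddCommGroup E] (γ : ℝ → E) (m : ℕ) (u : ℕ → ℝ) : ℝ :=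
  ∑ i ∈ Finset.range m, ‖γ (u (i + 1)) - γ (u i)‖

/-- The (Jordan) length of the arc `γ : [a,b] → E`: the supremum of the lengths of all
inscribed polygons, valued in `[0,∞]`. -/
def arcLen {E : Type*} [NormedAddCommGroup E] (γ : ℝ → E) (a b : ℝ) : ℝ≥0∞ :=
  ⨆ (m : ℕ) (u : ℕ → ℝ) (_ : InscribedIn a b m u), ENNReal.ofReal (polyLen γ m u)

/-- The list of vertices of the polygon inscribed in `γ` with parameters `u 0, …, u m`. -/
def vertexList {E : Type*} (γ : ℝ → E) (m : ℕ) (u : ℕ → ℝ) : List E :=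
  (List.range (m + 1)).map fun i => γ (u i)

/-- Collapse consecutive equal entries of a list to single entries. -/
def collapse {E : Type*} (l : List E) : List E :=
  @List.destutter E (· ≠ ·) (Classical.decRel _) l

/-- The sum of the turning angles of a polygon given by its list of vertices: at each
interior vertex, the angle in `[0,π]` between the incoming and outgoing edge vectors. -/
def turnSum {E : Type*} [NormedAddCommGroup E] [InnerProductSpace ℝ E] : List E → ℝ
  | a :: b :: c :: l => InnerProductGeometry.angle (b - a) (c - b) + turnSum (b :: c :: l)
  | _ => 0

/-- The sum, at each interior vertex, of the euclidean distance `‖u₊ - u₋‖` between the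
unit tangent vectors of the incoming and outgoing edges (so a corner of turning angle θ
contributes `2 sin(θ/2)`). -/
def starSum {E : Type*} [NormedAddCommGroup E] [InnerProductSpace ℝ E] : List E → ℝ
  | a :: b :: c :: l =>
      ‖(‖c - b‖⁻¹ • (c - b)) - (‖b - a‖⁻¹ • (b - a))‖ + starSum (b :: c :: l)
  | _ => 0

/-- The total curvature of the polygon inscribed in `γ` with parameters `u 0, …, u m`:
after collapsing consecutive equal vertices, the sum of its turning angles. -/
def polyTC {E : Type*} [NormedAddCommGroup E] [InnerProductSpace ℝ E]
    (γ : ℝ → E) (m : ℕ) (u : ℕ → ℝ) : ℝ :=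
  turnSum (collapse (vertexList γ m u))

/-- The total curvature of the arc `γ : [a,b] → E`: the supremum over all inscribed
polygons of their total curvature, valued in `[0,∞]`. -/
def arcTC {E : Type*} [NormedAddCommGroup E] [InnerProductSpace ℝ E]
    (γ : ℝ → E) (a b : ℝ) : ℝ≥0∞ :=
  ⨆ (m : ℕ) (u : ℕ → ℝ) (_ : InscribedIn a b m u), ENNReal.ofReal (polyTC γ m u)

/-- The euclidean total curvature `TC*` of the polygon inscribed in `γ` with parameters
`u 0, …, u m`. -/
def polyTCStar {E : Type*} [NormedAddCommGroup E] [InnerProductSpace ℝ E]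
    (γ : ℝ → E) (m : ℕ) (u : ℕ → ℝ) : ℝ :=
  starSum (collapse (vertexList γ m u))

/-- The euclidean total curvature `TC*` of the arc `γ : [a,b] → E`. -/
def arcTCStar {E : Type*} [NormedAddCommGroup E] [InnerProductSpace ℝ E]
    (γ : ℝ → E) (a b : ℝ) : ℝ≥0∞ :=
  ⨆ (m : ℕ) (u : ℕ → ℝ) (_ : InscribedIn a b m u), ENNReal.ofReal (polyTCStar γ m u)

/-- Cyclically ordered parameters `u 0 < ⋯ < u m` in `[0,1)` of a polygon inscribed in a
loop `γ : ℝ/ℤ → E`. -/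
def LoopInscribed (m : ℕ) (u : ℕ → ℝ) : Prop :=
  (∀ i < m, u i < u (i + 1)) ∧ ∀ i ≤ m, u i ∈ Set.Ico (0 : ℝ) 1

/-- The list of vertices of the polygon inscribed in the loop `γ` with parameters
`u 0, …, u m`. -/
def loopVertexList {E : Type*} (γ : AddCircle (1 : ℝ) → E) (m : ℕ) (u : ℕ → ℝ) : List E :=
  (List.range (m + 1)).map fun i => γ (u i : ℝ)

/-- The sum of the lengths of the successive edges of a list of points. -/
def lenList {E : Type*} [NormedAddCommGroup E] : List E → ℝ
  | a :: b :: l => ‖b - a‖ + lenList (b :: l)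
  | _ => 0

/-- The length of the closed polygon inscribed in the loop `γ` with parameters
`u 0, …, u m`: the sum of the edge lengths, indices taken cyclically. -/
def loopPolyLen {E : Type*} [NormedAddCommGroup E]
    (γ : AddCircle (1 : ℝ) → E) (m : ℕ) (u : ℕ → ℝ) : ℝ :=
  lenList (loopVertexList γ m u ++ (loopVertexList γ m u).take 1)

/-- The length of a loop `γ : ℝ/ℤ → E`: the supremum of the lengths of inscribed closed
polygons, valued in `[0,∞]`. -/
def loopLen {E : Type*} [NormedAddCommGroup E] (γ : AddCircle (1 : ℝ) → E) : ℝ≥0∞ :=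
  ⨆ (m : ℕ) (u : ℕ → ℝ) (_ : LoopInscribed m u), ENNReal.ofReal (loopPolyLen γ m u)

open Classical in
/-- Collapse consecutive equal vertices of a *cyclic* list of vertices: collapse
consecutive duplicates, also across the wrap-around. -/
def cyclicCollapse {E : Type*} (l : List E) : List E :=
  if 2 ≤ (collapse l).length ∧ (collapse l).getLast? = (collapse l).head? then
    (collapse l).dropLast
  else collapse l

/-- The total curvature of the closed polygon inscribed in the loop `γ` with parameters
`u 0, …, u m`: after cyclically collapsing consecutive equal vertices, the sum of the
turning angles at all of its vertices (every vertex of a closed polygon is interior). -/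
def loopPolyTC {E : Type*} [NormedAddCommGroup E] [InnerProductSpace ℝ E]
    (γ : AddCircle (1 : ℝ) → E) (m : ℕ) (u : ℕ → ℝ) : ℝ :=
  turnSum (cyclicCollapse (loopVertexList γ m u) ++
    (cyclicCollapse (loopVertexList γ m u)).take 2)

/-- The total curvature of a loop `γ : ℝ/ℤ → E`: the supremum over all inscribed closed
polygons of their total curvature, valued in `[0,∞]`. -/
def loopTC {E : Type*} [NormedAddCommGroup E] [InnerProductSpace ℝ E]
    (γ : AddCircle (1 : ℝ) → E) : ℝ≥0∞ :=
  ⨆ (m : ℕ) (u : ℕ → ℝ) (_ : LoopInscribed m u), ENNReal.ofReal (loopPolyTC γ m u)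

/-- The euclidean total curvature `TC*` of the closed inscribed polygon. -/
def loopPolyTCStar {E : Type*} [NormedAddCommGroup E] [InnerProductSpace ℝ E]
    (γ : AddCircle (1 : ℝ) → E) (m : ℕ) (u : ℕ → ℝ) : ℝ :=
  starSum (cyclicCollapse (loopVertexList γ m u) ++
    (cyclicCollapse (loopVertexList γ m u)).take 2)

/-- The euclidean total curvature `TC*` of a loop `γ : ℝ/ℤ → E`. -/
def loopTCStar {E : Type*} [NormedAddCommGroup E] [InnerProductSpace ℝ E]
    (γ : AddCircle (1 : ℝ) → E) : ℝ≥0∞ :=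
  ⨆ (m : ℕ) (u : ℕ → ℝ) (_ : LoopInscribed m u), ENNReal.ofReal (loopPolyTCStar γ m u)

end

/-!
For `0 < ε`, weigh the points of the circle by a bump near the maximum of the height `⟪γ ·, v⟫`
minus a bump near its minimum, balanced to have mean zero. The weight depends continuously and oddly
on the direction `v`, hence so does its first Fourier coefficient, and Borsuk–Ulam for odd maps
`S² → ℂ` yields a direction where that coefficient vanishes. A nonzero function without Fourier
modes of order at most one changes sign at least four times around the circle (Sturm–Hurwitz): if it
were never negative between its first and last positive points, its integral against a trigonometric
polynomial of degree one that is positive exactly between them would be positive. So the height is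
alternately `ε`-close to its maximum and its minimum, and compactness allows `ε = 0`.

Borsuk–Ulam in this case: a nowhere vanishing odd map has a logarithm in spherical coordinates. A
full turn changes the logarithm by a constant, which is `0` because the map is constant at the pole;
but on the equator two half turns add up to it, and each adds the same odd multiple of `π i`.
-/

open AddCircle
open scoped Real

lemma eq_of_forall_exp_eq {X : Type*} [TopologicalSpace X] [PreconnectedSpace X] {D : X → ℂ}
    (hD : Continuous D) {c : ℂ} (h : ∀ x, Complex.exp (D x) = c) (x y : X) : D x = D y :=
  congrFun (Complex.isCoveringMap_exp.eq_of_comp_eq (g₂ := fun _ => D y) hD continuous_const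
    (by ext; simp [h]) y rfl) x

lemma exists_continuous_exp_eq {X : Type*} [TopologicalSpace X] [SimplyConnectedSpace X]
    [LocallyPathConnectedSpace X] {f : X → ℂ} (hf : Continuous f) (h0 : ∀ x, f x ≠ 0) :
    ∃ g : X → ℂ, Continuous g ∧ ∀ x, Complex.exp (g x) = f x := by
  obtain ⟨x₀⟩ := (inferInstance : Nonempty X)
  obtain ⟨g, ⟨-, hg⟩, -⟩ := Complex.isCoveringMapOn_exp.existsUnique_continuousMap_lifts
    (A := X) ⟨f, hf⟩ (a₀ := x₀) (e₀ := Complex.log (f x₀)) (Complex.exp_log (h0 _)) h0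
  exact ⟨g, g.continuous, congrFun hg⟩

/-- The point of the unit sphere with polar angle `x.1` and azimuth `x.2`; the angles range over
all of `ℝ × ℝ`, so that the parametrization has a simply connected domain. -/
noncomputable def spherePoint (x : ℝ × ℝ) : Metric.sphere (0 : EuclideanSpace ℝ (Fin 3)) 1 :=
  ⟨!₂[Real.sin x.1 * Real.cos x.2, Real.sin x.1 * Real.sin x.2, Real.cos x.1], by
    rw [mem_sphere_zero_iff_norm, EuclideanSpace.norm_eq, Real.sqrt_eq_one]
    simp only [Fin.sum_univ_three, Real.norm_eq_abs, sq_abs, Matrix.cons_val]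
    linear_combination Real.sin x.1 ^ 2 * Real.sin_sq_add_cos_sq x.2 + Real.sin_sq_add_cos_sq x.1⟩

lemma continuous_spherePoint : Continuous spherePoint := by
  unfold spherePoint
  fun_prop

lemma spherePoint_zero (φ ψ : ℝ) : spherePoint (0, φ) = spherePoint (0, ψ) := by
  simp [spherePoint]

lemma spherePoint_add_two_pi (θ φ : ℝ) : spherePoint (θ, φ + 2 * π) = spherePoint (θ, φ) := by
  simp [spherePoint]

lemma spherePoint_equator_add_pi (φ : ℝ) :
    spherePoint (π / 2, φ + π) = -spherePoint (π / 2, φ) := by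
  ext i
  fin_cases i <;> simp [spherePoint]

theorem exists_eq_zero_of_odd_on_sphere {F : Metric.sphere (0 : EuclideanSpace ℝ (Fin 3)) 1 → ℂ}
    (hF : Continuous F) (hodd : ∀ v, F (-v) = -F v) : ∃ v, F v = 0 := by
  by_contra! hne
  obtain ⟨g, hg, hexp⟩ :=
    exists_continuous_exp_eq (hF.comp continuous_spherePoint) fun x => hne (spherePoint x)
  have winding_const (θ φ : ℝ) : g (θ, φ + 2 * π) - g (θ, φ) = g (0, 2 * π) - g (0, 0) := by
    have h := eq_of_forall_exp_eq (D := fun x : ℝ × ℝ => g (x.1, x.2 + 2 * π) - g x) (by fun_prop)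
      (c := 1) (fun x => by
        rw [Complex.exp_sub, hexp, hexp, Function.comp_apply, spherePoint_add_two_pi]
        exact div_self (hne _)) (θ, φ) (0, 0)
    simpa using h
  have winding_pole : g (0, 2 * π) = g (0, 0) :=
    eq_of_forall_exp_eq (D := fun φ : ℝ => g (0, φ)) (by fun_prop)
      (fun φ => by rw [hexp, Function.comp_apply, spherePoint_zero φ 0]) (2 * π) 0
  have half_turn_exp (φ : ℝ) : Complex.exp (g (π / 2, φ + π) - g (π / 2, φ)) = -1 := by
    rw [Complex.exp_sub, hexp, hexp, Function.comp_apply, Function.comp_apply,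
      spherePoint_equator_add_pi, hodd, neg_div, div_self (hne _)]
  have half_turn_const : g (π / 2, π + π) - g (π / 2, π) = g (π / 2, 0 + π) - g (π / 2, 0) :=
    eq_of_forall_exp_eq (D := fun φ : ℝ => g (π / 2, φ + π) - g (π / 2, φ)) (by fun_prop)
      half_turn_exp π 0
  have half_turn_zero : g (π / 2, 0 + π) - g (π / 2, 0) = 0 := by
    have full_turn := winding_const (π / 2) 0
    rw [winding_pole, sub_self, zero_add, two_mul] at full_turn
    rw [zero_add] at half_turn_const ⊢
    linear_combination full_turn / 2 - half_turn_const / 2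
  have := half_turn_exp 0
  rw [half_turn_zero, Complex.exp_zero] at this
  norm_num at this

/-- The excess of `f` over the level `ε` below its supremum: a bump supported where `f` is nearly
maximal. -/
noncomputable def peak {K : Type*} (ε : ℝ) (f : K → ℝ) (t : K) : ℝ :=
  max 0 (f t - (⨆ s, f s) + ε)

/-- The bump of `f` near its maximum minus its bump near its minimum, each multiplied by the mass of
the other one, so that the difference has mean zero. -/
noncomputable def balancedPeak {K : Type*} [MeasurableSpace K] (μ : Measure K) (ε : ℝ) (f : K → ℝ)
    (t : K) : ℝ :=
  (∫ s, peak ε (-f) s ∂μ) * peak ε f t - (∫ s, peak ε f s ∂μ) * peak ε (-f) t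

lemma peak_nonneg {K : Type*} (ε : ℝ) (f : K → ℝ) (t : K) : 0 ≤ peak ε f t :=
  le_max_left _ _

lemma balancedPeak_neg {K : Type*} [MeasurableSpace K] (μ : Measure K) (ε : ℝ) (f : K → ℝ) :
    balancedPeak μ ε (-f) = -balancedPeak μ ε f := by
  ext t
  simp [balancedPeak]

lemma peak_pos_of_balancedPeak_pos {K : Type*} [MeasurableSpace K] {μ : Measure K} {ε : ℝ}
    {f : K → ℝ} {t : K} (ht : 0 < balancedPeak μ ε f t) : 0 < peak ε f t := by
  have hneg : 0 ≤ (∫ s, peak ε f s ∂μ) * peak ε (-f) t :=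
    mul_nonneg (integral_nonneg (peak_nonneg ε f)) (peak_nonneg ε (-f) t)
  exact pos_of_mul_pos_right (hneg.trans_lt (sub_pos.mp ht))
    (integral_nonneg (peak_nonneg ε (-f)))

section CompactSpace

variable {K X : Type*} [TopologicalSpace K] [CompactSpace K] [TopologicalSpace X] {f : K → ℝ}
  {h : X → K → ℝ} {ε : ℝ}

lemma le_add_of_peak_pos (hf : Continuous f) {t : K} (ht : 0 < peak ε f t) (s : K) :
    f s ≤ f t + ε := by
  have hs : f s ≤ ⨆ s, f s := le_ciSup (isCompact_range hf).bddAbove s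
  have := (lt_max_iff.mp ht).resolve_left (lt_irrefl 0)
  linarith

lemma exists_peak_pos [Nonempty K] (hf : Continuous f) (hε : 0 < ε) : ∃ t, 0 < peak ε f t := by
  obtain ⟨t, ht⟩ := (isCompact_range hf).sSup_mem (range_nonempty f)
  exact ⟨t, lt_max_of_lt_right (by rw [ht, iSup, sub_self, zero_add]; exact hε)⟩

lemma continuous_uncurry_peak (hh : Continuous (Function.uncurry h)) (ε : ℝ) :
    Continuous (Function.uncurry fun x => peak ε (h x)) := by
  have hsup : Continuous fun x => ⨆ t, h x t := by
    simpa only [image_univ] using! isCompact_univ.continuous_sSup (f := h) hh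
  exact continuous_const.max ((hh.sub (hsup.comp continuous_fst)).add continuous_const)

lemma continuous_peak (hf : Continuous f) (ε : ℝ) : Continuous (peak ε f) :=
  (continuous_uncurry_peak (h := fun _ : Unit => f) (hf.comp continuous_snd) ε).comp
    (Continuous.prodMk_right ())

variable [MeasurableSpace K] {μ : Measure K}

lemma continuous_balancedPeak (hf : Continuous f) (ε : ℝ) : Continuous (balancedPeak μ ε f) :=
  ((continuous_peak hf ε).const_mul _).sub ((continuous_peak hf.neg ε).const_mul _)

variable [BorelSpace K] [IsFiniteMeasure μ]

lemma integral_peak_pos [Nonempty K] [μ.IsOpenPosMeasure] (hf : Continuous f) (hε : 0 < ε) :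
    0 < ∫ t, peak ε f t ∂μ := by
  obtain ⟨t, ht⟩ := exists_peak_pos hf hε
  exact (continuous_peak hf ε).integral_pos_of_hasCompactSupport_nonneg_nonzero
    (.of_compactSpace _) (peak_nonneg ε f) ht.ne'

lemma integral_balancedPeak (hf : Continuous f) (ε : ℝ) :
    ∫ t, balancedPeak μ ε f t ∂μ = 0 := by
  have hint {g : K → ℝ} (hg : Continuous g) : Integrable (peak ε g) μ :=
    (continuous_peak hg ε).integrable_of_hasCompactSupport (.of_compactSpace _)
  unfold balancedPeak
  rw [integral_sub ((hint hf).const_mul _) ((hint hf.neg).const_mul _), integral_const_mul,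
    integral_const_mul]
  ring

lemma continuous_uncurry_balancedPeak [FirstCountableTopology X]
    [LocallyCompactSpace X] (hh : Continuous (Function.uncurry h)) (ε : ℝ) :
    Continuous (Function.uncurry fun x => balancedPeak μ ε (h x)) := by
  have hpeak := continuous_uncurry_peak hh ε
  have hpeak_neg := continuous_uncurry_peak (h := fun x => -h x) hh.neg ε
  have hint {k : X → K → ℝ} (hk : Continuous (Function.uncurry k)) :
      Continuous fun p : X × K => ∫ t, k p.1 t ∂μ := by
    simpa only [Measure.restrict_univ] using!
      (continuous_parametric_integral_of_continuous (μ := μ) hk isCompact_univ).comp continuous_fst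
  exact ((hint hpeak_neg).mul hpeak).sub ((hint hpeak).mul hpeak_neg)

end CompactSpace

/-- The trigonometric polynomial of degree one on the circle that is positive on the arc from `p` to
`q` and negative on the complementary arc. It is written through `fourier (-1)`, so that integrating
it against `f` only involves the mean and the first Fourier coefficient of `f`. -/
noncomputable def arcPolynomial (p q : ℝ) (t : UnitAddCircle) : ℝ :=
  (Complex.exp (π * (p + q) * Complex.I) * fourier (-1) t).re - Real.cos (π * (q - p))

lemma continuous_arcPolynomial (p q : ℝ) : Continuous (arcPolynomial p q) := by
  unfold arcPolynomial
  fun_prop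

lemma arcPolynomial_coe (p q t : ℝ) :
    arcPolynomial p q t = 2 * Real.sin (π * (t - p)) * Real.sin (π * (q - t)) := by
  have hre : (Complex.exp (π * (p + q) * Complex.I) * fourier (-1) (t : UnitAddCircle)).re =
      Real.cos (π * (t - p) - π * (q - t)) := by
    rw [fourier_coe_apply, ← Complex.exp_add, ← Real.cos_neg, ← Complex.exp_ofReal_mul_I_re]
    congr 2
    push_cast
    ring
  rw [arcPolynomial, hre, show π * (q - p) = π * (t - p) + π * (q - t) by ring, Real.cos_sub,
    Real.cos_add]
  ring

lemma arcPolynomial_pos_of_mem_Ioo {p q t : ℝ} (hp : 0 ≤ p) (hq : q ≤ 1) (ht : t ∈ Ioo p q) :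
    0 < arcPolynomial p q t := by
  have sin_pos {x : ℝ} (h0 : 0 < x) (h1 : x < 1) : 0 < Real.sin (π * x) :=
    Real.sin_pos_of_pos_of_lt_pi (mul_pos Real.pi_pos h0) (mul_lt_of_lt_one_right Real.pi_pos h1)
  obtain ⟨hpt, htq⟩ := ht
  rw [arcPolynomial_coe]
  exact mul_pos (mul_pos two_pos (sin_pos (by linarith) (by linarith)))
    (sin_pos (by linarith) (by linarith))

lemma arcPolynomial_nonpos_of_notMem_Ioo {p q t : ℝ} (hp : 0 ≤ p) (hpq : p ≤ q) (hq : q ≤ 1)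
    (ht : t ∈ Icc (0 : ℝ) 1) (htpq : t ∉ Ioo p q) : arcPolynomial p q t ≤ 0 := by
  have sin_nonneg {x : ℝ} (h0 : 0 ≤ x) (h1 : x ≤ 1) : 0 ≤ Real.sin (π * x) :=
    Real.sin_nonneg_of_nonneg_of_le_pi (mul_nonneg Real.pi_pos.le h0)
      (mul_le_of_le_one_right Real.pi_pos.le h1)
  have sin_nonpos {x : ℝ} (h0 : x ≤ 0) (h1 : -1 ≤ x) : Real.sin (π * x) ≤ 0 := by
    have := sin_nonneg (neg_nonneg.mpr h0) (neg_le.mp h1)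
    rwa [mul_neg, Real.sin_neg, neg_nonneg] at this
  obtain ⟨ht0, ht1⟩ := ht
  rw [arcPolynomial_coe, mul_assoc]
  refine mul_nonpos_of_nonneg_of_nonpos two_pos.le ?_
  rcases le_or_gt t p with htp | hpt
  · exact mul_nonpos_of_nonpos_of_nonneg (sin_nonpos (by linarith) (by linarith))
      (sin_nonneg (by linarith) (by linarith))
  · have hqt : q ≤ t := not_lt.mp fun htq => htpq ⟨hpt, htq⟩
    exact mul_nonpos_of_nonneg_of_nonpos (sin_nonneg (by linarith) (by linarith))
      (sin_nonpos (by linarith) (by linarith))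

lemma integral_mul_arcPolynomial {f : UnitAddCircle → ℝ} (hf : Continuous f)
    (hmean : ∫ t, f t ∂haarAddCircle = 0) (hcoeff : fourierCoeff (fun t => (f t : ℂ)) 1 = 0)
    (p q : ℝ) : ∫ t, f t * arcPolynomial p q t ∂haarAddCircle = 0 := by
  set c := Complex.exp (π * (p + q) * Complex.I)
  have hint {E : Type} [NormedAddCommGroup E] {g : UnitAddCircle → E} (hg : Continuous g) :
      Integrable g haarAddCircle := hg.integrable_of_hasCompactSupport (.of_compactSpace _)
  have hre : ∫ t, (c * (fourier (-1) t • (f t : ℂ))).re ∂haarAddCircle = 0 := by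
    have h := Complex.reCLM.integral_comp_comm (μ := haarAddCircle)
      (φ := fun t : UnitAddCircle => c * (fourier (-1) t • (f t : ℂ))) (hint (by fun_prop))
    rw [integral_const_mul] at h
    rw [fourierCoeff] at hcoeff
    rw [hcoeff, mul_zero, map_zero] at h
    exact h
  calc ∫ t, f t * arcPolynomial p q t ∂haarAddCircle
    _ = ∫ t, ((c * (fourier (-1) t • (f t : ℂ))).re - Real.cos (π * (q - p)) * f t)
          ∂haarAddCircle := by
      congr 1 with t
      rw [arcPolynomial, smul_eq_mul, ← mul_assoc, Complex.re_mul_ofReal]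
      ring
    _ = 0 := by
      rw [integral_sub (hint (by fun_prop)) (hint (by fun_prop)), integral_const_mul, hmean, hre]
      ring

lemma integral_haarAddCircle_pos {f : UnitAddCircle → ℝ} (hf : Continuous f) (hf0 : f ≠ 0)
    (hnonneg : ∀ t ∈ Ioo (0 : ℝ) 1, 0 ≤ f t) : 0 < ∫ t, f t ∂haarAddCircle := by
  have hnonneg_Icc (t : ℝ) (ht : t ∈ Icc (0 : ℝ) 1) : 0 ≤ f t := by
    rw [← closure_Ioo zero_ne_one] at ht
    exact le_on_closure (f := fun _ => 0) (g := fun t : ℝ => f t) hnonneg continuousOn_const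
      (hf.comp (AddCircle.continuous_mk' 1)).continuousOn ht
  have hnonneg_circle (t : UnitAddCircle) : 0 ≤ f t := by
    obtain ⟨x, hx, rfl⟩ := AddCircle.eq_coe_Ico t
    exact hnonneg_Icc x (Ico_subset_Icc_self hx)
  obtain ⟨t, ht⟩ := Function.ne_iff.mp hf0
  exact hf.integral_pos_of_hasCompactSupport_nonneg_nonzero (.of_compactSpace _) hnonneg_circle ht

lemma exists_mem_Ioo_pos_of_integral_eq_zero {f : UnitAddCircle → ℝ} (hf : Continuous f)
    (hf0 : f ≠ 0) (hmean : ∫ t, f t ∂haarAddCircle = 0) : ∃ t ∈ Ioo (0 : ℝ) 1, 0 < f t := by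
  by_contra! h
  have := integral_haarAddCircle_pos hf.neg (neg_ne_zero.mpr hf0)
    fun t ht => neg_nonneg.mpr (h t ht)
  simp only [Pi.neg_apply, integral_neg, hmean, neg_zero, lt_irrefl] at this

lemma subset_Ioo_csInf_csSup {α : Type*} [ConditionallyCompleteLinearOrder α]
    [TopologicalSpace α] [OrderTopology α] [DenselyOrdered α] [NoMinOrder α] [NoMaxOrder α]
    {s : Set α} (hs : IsOpen s) (hb : BddBelow s) (hb' : BddAbove s) :
    s ⊆ Ioo (sInf s) (sSup s) := by
  rw [← interior_Icc]
  exact hs.subset_interior_iff.mpr (subset_Icc_csInf_csSup hb hb')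

lemma exists_mem_Ioo_neg_of_pos_subset_Ioo {f : UnitAddCircle → ℝ} (hf : Continuous f)
    (hf0 : f ≠ 0) (hmean : ∫ t, f t ∂haarAddCircle = 0)
    (hcoeff : fourierCoeff (fun t => (f t : ℂ)) 1 = 0) {p q : ℝ} (hp : 0 ≤ p) (hq : q ≤ 1)
    (hpos : {t ∈ Ioo (0 : ℝ) 1 | 0 < f t} ⊆ Ioo p q) : ∃ y ∈ Ioo p q, f y < 0 := by
  by_contra! hnonneg
  obtain ⟨t₀, ht₀, hft₀⟩ := exists_mem_Ioo_pos_of_integral_eq_zero hf hf0 hmean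
  have hmem : t₀ ∈ Ioo p q := hpos ⟨ht₀, hft₀⟩
  have hprod (t : ℝ) (ht : t ∈ Ioo (0 : ℝ) 1) : 0 ≤ f t * arcPolynomial p q t := by
    by_cases htpq : t ∈ Ioo p q
    · exact mul_nonneg (hnonneg t htpq) (arcPolynomial_pos_of_mem_Ioo hp hq htpq).le
    · exact mul_nonneg_of_nonpos_of_nonpos (not_lt.mp fun hft => htpq (hpos ⟨ht, hft⟩))
        (arcPolynomial_nonpos_of_notMem_Ioo hp (hmem.1.trans hmem.2).le hq
          (Ioo_subset_Icc_self ht) htpq)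
  have hprod_ne : (fun t => f t * arcPolynomial p q t) ≠ 0 := fun h =>
    (mul_pos hft₀ (arcPolynomial_pos_of_mem_Ioo hp hq hmem)).ne' (congrFun h t₀)
  exact (integral_haarAddCircle_pos (hf.mul (continuous_arcPolynomial p q)) hprod_ne hprod).ne'
    (integral_mul_arcPolynomial hf hmean hcoeff p q)

lemma exists_pos_neg_pos {f : UnitAddCircle → ℝ} (hf : Continuous f) (hf0 : f ≠ 0)
    (hmean : ∫ t, f t ∂haarAddCircle = 0) (hcoeff : fourierCoeff (fun t => (f t : ℂ)) 1 = 0) :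
    ∃ x ∈ Ioo (0 : ℝ) 1, ∃ y ∈ Ioo (0 : ℝ) 1, ∃ z ∈ Ioo (0 : ℝ) 1,
      x < y ∧ y < z ∧ 0 < f x ∧ f y < 0 ∧ 0 < f z := by
  set P := {t ∈ Ioo (0 : ℝ) 1 | 0 < f t}
  have hPopen : IsOpen P :=
    isOpen_Ioo.inter (isOpen_lt continuous_const (hf.comp (AddCircle.continuous_mk' 1)))
  have hPne : P.Nonempty := exists_mem_Ioo_pos_of_integral_eq_zero hf hf0 hmean
  have hPIcc : P ⊆ Icc 0 1 := fun t ht => Ioo_subset_Icc_self ht.1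
  have hinf : 0 ≤ sInf P := le_csInf hPne fun t ht => (hPIcc ht).1
  have hsup : sSup P ≤ 1 := csSup_le hPne fun t ht => (hPIcc ht).2
  have hPIoo : P ⊆ Ioo (sInf P) (sSup P) :=
    subset_Ioo_csInf_csSup hPopen (bddBelow_Icc.mono hPIcc) (bddAbove_Icc.mono hPIcc)
  obtain ⟨y, hy, hfy⟩ :=
    exists_mem_Ioo_neg_of_pos_subset_Ioo hf hf0 hmean hcoeff hinf hsup hPIoo
  obtain ⟨x, hx, hxy⟩ := exists_lt_of_csInf_lt hPne hy.1
  obtain ⟨z, hz, hyz⟩ := exists_lt_of_lt_csSup hPne hy.2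
  exact ⟨x, hx.1, y, ⟨hinf.trans_lt hy.1, hy.2.trans_le hsup⟩, z, hz.1, hxy, hyz, hx.2, hfy, hz.2⟩

theorem exists_alternating_signs {f : UnitAddCircle → ℝ} (hf : Continuous f) (hf0 : f ≠ 0)
    (hmean : ∫ t, f t ∂haarAddCircle = 0) (hcoeff : fourierCoeff (fun t => (f t : ℂ)) 1 = 0) :
    ∃ t : Fin 4 → ℝ, StrictMono t ∧ (∀ i, t i ∈ Ioo (0 : ℝ) 1) ∧
      ((∀ i : Fin 4, 0 < (-1) ^ (i : ℕ) * f (t i)) ∨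
        ∀ i : Fin 4, 0 < (-1) ^ (i : ℕ) * (-f) (t i)) := by
  obtain ⟨x, hx, y, hy, z, hz, hxy, hyz, hfx, hfy, hfz⟩ := exists_pos_neg_pos hf hf0 hmean hcoeff
  have hcoeff_neg : fourierCoeff (fun t => ((-f) t : ℂ)) 1 = 0 := by
    simpa [fourierCoeff, integral_neg] using hcoeff
  obtain ⟨x', hx', y', hy', z', hz', hxy', hyz', hfx', hfy', hfz'⟩ :=
    exists_pos_neg_pos hf.neg (neg_ne_zero.mpr hf0)
      (by simp only [Pi.neg_apply, integral_neg, hmean, neg_zero]) hcoeff_neg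
  simp only [Pi.neg_apply, neg_pos, neg_neg_iff_pos] at hfx' hfy' hfz'
  rcases lt_trichotomy x x' with h | rfl | h
  · refine ⟨![x, x', y', z'], by simp [*], by simp_all [Fin.forall_fin_succ], .inl ?_⟩
    simp [Fin.forall_fin_succ, pow_succ, *]
  · exact absurd hfx hfx'.not_gt
  · refine ⟨![x', x, y, z], by simp [*], by simp_all [Fin.forall_fin_succ], .inr ?_⟩
    simp [Fin.forall_fin_succ, pow_succ, *]

/-- Four parameters in increasing order at which `f` is alternately within `ε` of its maximum (even
indices) and within `ε` of its minimum (odd indices). The parameters live in the compact interval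
and may coincide, so that the condition is closed. -/
def IsInterleaved (ε : ℝ) (f : UnitAddCircle → ℝ) (t : Fin 4 → unitInterval) : Prop :=
  Monotone t ∧ ∀ (i : Fin 4) (s : UnitAddCircle), (-1) ^ (i : ℕ) * (f s - f (t i : ℝ)) ≤ ε

lemma isInterleaved_of_balancedPeak_alternating {ε : ℝ} {f : UnitAddCircle → ℝ}
    (hf : Continuous f) {t : Fin 4 → unitInterval} (ht : Monotone t)
    (halt : ∀ i : Fin 4, 0 < (-1) ^ (i : ℕ) * balancedPeak haarAddCircle ε f (t i : ℝ)) :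
    IsInterleaved ε f t := by
  refine ⟨ht, fun i s => ?_⟩
  rcases neg_one_pow_eq_or ℝ (i : ℕ) with hi | hi
  · have hpos : 0 < balancedPeak haarAddCircle ε f (t i : ℝ) := by simpa [hi] using halt i
    have := le_add_of_peak_pos hf (peak_pos_of_balancedPeak_pos hpos) s
    rw [hi]
    linarith
  · have hpos : 0 < balancedPeak haarAddCircle ε (-f) (t i : ℝ) := by
      simpa [hi, balancedPeak_neg] using halt i
    have := le_add_of_peak_pos hf.neg (peak_pos_of_balancedPeak_pos hpos) s
    simp only [Pi.neg_apply] at this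
    rw [hi]
    linarith

lemma exists_isInterleaved_of_balancedPeak_eq_zero {ε : ℝ} (hε : 0 < ε) {f : UnitAddCircle → ℝ}
    (hf : Continuous f) (h0 : balancedPeak haarAddCircle ε f = 0) : ∃ t, IsInterleaved ε f t := by
  obtain ⟨t₀, hmax⟩ := exists_peak_pos hf hε
  have hmin : 0 < peak ε (-f) t₀ := by
    have hpos := mul_pos (integral_peak_pos (μ := haarAddCircle) hf.neg hε) hmax
    rw [sub_eq_zero.mp (congrFun h0 t₀)] at hpos
    exact pos_of_mul_pos_right hpos (integral_nonneg (peak_nonneg ε f))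
  obtain ⟨t, ht, rfl⟩ := AddCircle.eq_coe_Ico t₀
  refine ⟨fun _ => ⟨t, Ico_subset_Icc_self ht⟩, monotone_const, fun i s => ?_⟩
  have hs := le_add_of_peak_pos hf hmax s
  have hs' := le_add_of_peak_pos hf.neg hmin s
  simp only [Pi.neg_apply] at hs'
  rcases neg_one_pow_eq_or ℝ (i : ℕ) with hi | hi <;> rw [hi] <;> linarith

lemma exists_isInterleaved_of_fourierCoeff_balancedPeak {ε : ℝ} (hε : 0 < ε)
    {f : UnitAddCircle → ℝ} (hf : Continuous f)
    (h1 : fourierCoeff (fun t => (balancedPeak haarAddCircle ε f t : ℂ)) 1 = 0) :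
    ∃ t, IsInterleaved ε f t ∨ IsInterleaved ε (-f) t := by
  by_cases h0 : balancedPeak haarAddCircle ε f = 0
  · exact (exists_isInterleaved_of_balancedPeak_eq_zero hε hf h0).imp fun _ => .inl
  obtain ⟨t, htmono, htmem, halt⟩ := exists_alternating_signs (continuous_balancedPeak hf ε) h0
    (integral_balancedPeak hf ε) h1
  let u : Fin 4 → unitInterval := fun i => ⟨t i, Ioo_subset_Icc_self (htmem i)⟩
  have hu : Monotone u := htmono.monotone
  rw [← balancedPeak_neg] at halt
  exact ⟨u, halt.imp (isInterleaved_of_balancedPeak_alternating hf hu)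
    (isInterleaved_of_balancedPeak_alternating hf.neg hu)⟩

lemma exists_isInterleaved_of_odd {ε : ℝ} (hε : 0 < ε)
    {h : Metric.sphere (0 : EuclideanSpace ℝ (Fin 3)) 1 → UnitAddCircle → ℝ}
    (hh : Continuous (Function.uncurry h)) (hodd : ∀ v, h (-v) = -h v) :
    ∃ v t, IsInterleaved ε (h v) t := by
  have hpeak := continuous_uncurry_balancedPeak (μ := haarAddCircle) hh ε
  let F (v : Metric.sphere (0 : EuclideanSpace ℝ (Fin 3)) 1) : ℂ :=
    fourierCoeff (fun t => (balancedPeak haarAddCircle ε (h v) t : ℂ)) 1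
  have hF : Continuous F := by
    have hintegrand : Continuous (Function.uncurry fun v t =>
        fourier (-1) t • (balancedPeak haarAddCircle ε (h v) t : ℂ)) :=
      ((map_continuous (fourier (-1))).comp continuous_snd).smul
        (Complex.continuous_ofReal.comp hpeak)
    simpa only [Measure.restrict_univ] using!
      continuous_parametric_integral_of_continuous (μ := haarAddCircle) hintegrand isCompact_univ
  have hFodd (v) : F (-v) = -F v := by
    simp [F, hodd, balancedPeak_neg, fourierCoeff, integral_neg]
  obtain ⟨v, hv⟩ := exists_eq_zero_of_odd_on_sphere hF hFodd
  obtain ⟨t, ht | ht⟩ := exists_isInterleaved_of_fourierCoeff_balancedPeak hε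
    (hh.comp (Continuous.prodMk_right v)) hv
  · exact ⟨v, t, ht⟩
  · exact ⟨-v, t, by rwa [hodd]⟩

lemma isClosed_setOf_exists_isInterleaved {X : Type*} [TopologicalSpace X] [CompactSpace X]
    {h : X → UnitAddCircle → ℝ} (hh : Continuous (Function.uncurry h)) :
    IsClosed {ε | ∃ x t, IsInterleaved ε (h x) t} := by
  have hheight (s : UnitAddCircle) :
      Continuous fun p : (X × (Fin 4 → unitInterval)) × ℝ => h p.1.1 s :=
    hh.comp ((continuous_fst.comp continuous_fst).prodMk continuous_const)
  have htouch (i : Fin 4) :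
      Continuous fun p : (X × (Fin 4 → unitInterval)) × ℝ => h p.1.1 (p.1.2 i : ℝ) :=
    hh.comp ((continuous_fst.comp continuous_fst).prodMk
      ((AddCircle.continuous_mk' 1).comp (by fun_prop)))
  have hclosed : IsClosed {p : (X × (Fin 4 → unitInterval)) × ℝ |
      IsInterleaved p.2 (h p.1.1) p.1.2} := by
    simp only [IsInterleaved, ofPred_and, ofPred_forall]
    exact (isClosed_monotone.preimage (continuous_snd.comp continuous_fst)).inter
      (isClosed_iInter fun i => isClosed_iInter fun s =>
        isClosed_le (continuous_const.mul ((hheight s).sub (htouch i))) continuous_snd)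
  convert isClosedMap_snd_of_compactSpace _ hclosed using 1
  ext ε
  simp

lemma exists_isInterleaved_zero_of_odd
    {h : Metric.sphere (0 : EuclideanSpace ℝ (Fin 3)) 1 → UnitAddCircle → ℝ}
    (hh : Continuous (Function.uncurry h)) (hodd : ∀ v, h (-v) = -h v) :
    ∃ v t, IsInterleaved 0 (h v) t := by
  have hsubset : Ioi 0 ⊆ {ε | ∃ v t, IsInterleaved ε (h v) t} :=
    fun _ hε => exists_isInterleaved_of_odd hε hh hodd
  refine (isClosed_setOf_exists_isInterleaved hh).closure_subset_iff.mpr hsubset ?_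
  rw [closure_Ioi]
  exact self_mem_Ici

/-- A strict version of `IsInterleaved 0`: four distinct points in their cyclic order on the circle
at which `f` alternately attains its maximum (even indices) and its minimum (odd indices). -/
def IsInterleavedExtrema (f : UnitAddCircle → ℝ) (t : Fin 4 → ℝ) : Prop :=
  StrictMono t ∧ (∀ i, t i ∈ Ico (0 : ℝ) 1) ∧
    ∀ (i : Fin 4) (s : UnitAddCircle), (-1) ^ (i : ℕ) * (f s - f (t i)) ≤ 0

lemma exists_isInterleavedExtrema_of_forall_eq {f : UnitAddCircle → ℝ}
    (hf : ∀ s t, f s = f t) : ∃ t, IsInterleavedExtrema f t := by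
  refine ⟨fun i => i / 4, fun i j hij => ?_, fun i => ⟨by positivity, ?_⟩, fun i s => ?_⟩
  · have : (i : ℝ) < j := by exact_mod_cast hij
    exact div_lt_div_of_pos_right this four_pos
  · have : (i : ℝ) < 4 := by exact_mod_cast i.isLt
    linarith
  · rw [hf s, sub_self, mul_zero]

lemma IsInterleaved.forall_eq_of_eq {f : UnitAddCircle → ℝ} {t : Fin 4 → unitInterval}
    (ht : IsInterleaved 0 f t) {i j : Fin 4} (hij : (-1 : ℝ) ^ (j : ℕ) = -(-1) ^ (i : ℕ))
    (heq : ((t i : ℝ) : UnitAddCircle) = (t j : ℝ)) (s s' : UnitAddCircle) : f s = f s' := by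
  have htouch (s : UnitAddCircle) : f s = f (t i : ℝ) := by
    have hi := ht.2 i s
    have hj := ht.2 j s
    rw [hij, ← heq, neg_mul, neg_nonpos] at hj
    simpa [sub_eq_zero] using le_antisymm hi hj
  rw [htouch s, htouch s']

lemma IsInterleaved.strictMono {f : UnitAddCircle → ℝ} {t : Fin 4 → unitInterval}
    (ht : IsInterleaved 0 f t) (hf : ¬ ∀ s s', f s = f s') : StrictMono t :=
  Fin.strictMono_iff_lt_succ.mpr fun i =>
    (ht.1 (Fin.castSucc_lt_succ).le).lt_of_ne fun heq =>
      hf (ht.forall_eq_of_eq (i := i.castSucc) (j := i.succ) (by simp [pow_succ]) (by rw [heq]))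

lemma IsInterleaved.exists_isInterleavedExtrema {f : UnitAddCircle → ℝ} {t : Fin 4 → unitInterval}
    (ht : IsInterleaved 0 f t) :
    ∃ u, IsInterleavedExtrema f u ∨ IsInterleavedExtrema (-f) u := by
  by_cases hf : ∀ s s', f s = f s'
  · exact (exists_isInterleavedExtrema_of_forall_eq hf).imp fun _ => .inl
  have hmono : StrictMono fun i => (t i : ℝ) := ht.strictMono hf
  rcases (t 3).2.2.lt_or_eq with hlt | heq
  · exact ⟨fun i => t i, .inl ⟨hmono, fun i =>
      ⟨(t i).2.1, (hmono.monotone (Fin.le_last i)).trans_lt hlt⟩, ht.2⟩⟩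
  -- The last point is the base point of the circle, so it moves to the front as the parameter `0`.
  have hbase : ((t 3 : ℝ) : UnitAddCircle) = (0 : ℝ) := by
    rw [heq, AddCircle.coe_period, AddCircle.coe_zero]
  have hpos : 0 < (t 0 : ℝ) := (t 0).2.1.lt_of_ne fun h0 =>
    hf (ht.forall_eq_of_eq (i := 3) (j := 0) (by norm_num) (by rw [hbase, ← h0]))
  refine ⟨Fin.cons 0 fun i : Fin 3 => (t i.castSucc : ℝ), .inr ⟨?_, ?_, ?_⟩⟩
  · exact Fin.strictMono_cons.mpr
      ⟨fun i => hpos.trans_le (hmono.monotone (Fin.zero_le _)), hmono.comp Fin.strictMono_castSucc⟩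
  · refine Fin.cases (by simp) fun i => ⟨(t i.castSucc).2.1, ?_⟩
    exact (hmono (Fin.castSucc_lt_last i)).trans_eq heq
  · refine Fin.cases (fun s => ?_) fun i s => ?_
    · simpa [hbase, pow_succ, neg_add_eq_sub] using ht.2 3 s
    · refine le_of_eq_of_le ?_ (ht.2 i.castSucc s)
      simp only [Fin.val_succ, Fin.val_castSucc, Fin.cons_succ, Pi.neg_apply, pow_succ]
      ring

theorem exists_isInterleavedExtrema_of_odd
    {h : Metric.sphere (0 : EuclideanSpace ℝ (Fin 3)) 1 → UnitAddCircle → ℝ}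
    (hh : Continuous (Function.uncurry h)) (hodd : ∀ v, h (-v) = -h v) :
    ∃ v t, IsInterleavedExtrema (h v) t := by
  obtain ⟨v, t, ht⟩ := exists_isInterleaved_zero_of_odd hh hodd
  obtain ⟨u, hu | hu⟩ := ht.exists_isInterleavedExtrema
  · exact ⟨v, u, hu⟩
  · exact ⟨-v, u, by rwa [hodd]⟩

lemma exists_linearIsometry_euclideanSpace {E : Type*} [NormedAddCommGroup E]
    [InnerProductSpace ℝ E] {n : ℕ} (hn : n ≤ Module.rank ℝ E) :
    Nonempty (EuclideanSpace ℝ (Fin n) →ₗᵢ[ℝ] E) := by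
  obtain ⟨e, he⟩ := Module.le_rank_iff.mp hn
  have hfinrank : Module.finrank ℝ (Submodule.span ℝ (range e)) = n := by
    rw [finrank_span_eq_card he, Fintype.card_fin]
  have := FiniteDimensional.span_of_finite ℝ (finite_range e)
  exact ⟨(Submodule.span ℝ (range e)).subtypeₗᵢ.comp
    ((stdOrthonormalBasis ℝ _).reindex (finCongr hfinrank)).repr.symm.toLinearIsometry⟩

theorem wienholtz_interleaved_support_general {E : Type*} [NormedAddCommGroup E]
    [InnerProductSpace ℝ E] (hE : 3 ≤ Module.rank ℝ E)
    (γ : AddCircle (1 : ℝ) → E) (hγ : Continuous γ) :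
    ∃ (v : E) (t₁ t₂ t₃ t₄ : ℝ), ‖v‖ = 1 ∧
      0 ≤ t₁ ∧ t₁ < t₂ ∧ t₂ < t₃ ∧ t₃ < t₄ ∧ t₄ < 1 ∧
      (∀ s : AddCircle (1 : ℝ), ⟪γ s, v⟫ ≤ ⟪γ (t₁ : ℝ), v⟫) ∧
      ⟪γ (t₃ : ℝ), v⟫ = ⟪γ (t₁ : ℝ), v⟫ ∧
      (∀ s : AddCircle (1 : ℝ), ⟪γ (t₂ : ℝ), v⟫ ≤ ⟪γ s, v⟫) ∧
      ⟪γ (t₄ : ℝ), v⟫ = ⟪γ (t₂ : ℝ), v⟫ := by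
  obtain ⟨L⟩ := exists_linearIsometry_euclideanSpace (n := 3) (by exact_mod_cast hE)
  obtain ⟨v, t, hmono, hmem, ht⟩ := exists_isInterleavedExtrema_of_odd
    (h := fun v s => ⟪γ s, L v⟫)
    ((hγ.comp continuous_snd).inner
      (L.continuous.comp (continuous_subtype_val.comp continuous_fst)))
    (fun v => by ext s; simp)
  have hmax₁ (s) : ⟪γ s, L v⟫ ≤ ⟪γ (t 0 : ℝ), L v⟫ := by simpa using ht 0 s
  have hmin₂ (s) : ⟪γ (t 1 : ℝ), L v⟫ ≤ ⟪γ s, L v⟫ := by simpa using ht 1 s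
  have hmax₃ (s) : ⟪γ s, L v⟫ ≤ ⟪γ (t 2 : ℝ), L v⟫ := by simpa using ht 2 s
  have hmin₄ (s) : ⟪γ (t 3 : ℝ), L v⟫ ≤ ⟪γ s, L v⟫ := by simpa [pow_succ] using ht 3 s
  exact ⟨L v, t 0, t 1, t 2, t 3, by rw [L.norm_map, norm_eq_of_mem_sphere], (hmem 0).1,
    hmono (by decide), hmono (by decide), hmono (by decide), (hmem 3).2,
    hmax₁, (hmax₁ _).antisymm (hmax₃ _), hmin₂, (hmin₄ _).antisymm (hmin₂ _)⟩

open scoped RealInnerProductSpace in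
/-- Wienholtz: every continuous closed curve in `ℝᵈ`, `d ≥ 3`, admits a
pair of parallel interleaved bitangent support hyperplanes: there are a unit vector `v`
and parameters `t₁ < t₂ < t₃ < t₄` in `[0,1)` such that the height `⟨γ ·, v⟩` attains its
maximum at `t₁` and `t₃` and its minimum at `t₂` and `t₄`. -/
theorem wienholtz_interleaved_support (d : ℕ) (hd : 3 ≤ d)
    (γ : AddCircle (1 : ℝ) → EuclideanSpace ℝ (Fin d)) (hγ : Continuous γ) :
    ∃ (v : EuclideanSpace ℝ (Fin d)) (t₁ t₂ t₃ t₄ : ℝ), ‖v‖ = 1 ∧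
      0 ≤ t₁ ∧ t₁ < t₂ ∧ t₂ < t₃ ∧ t₃ < t₄ ∧ t₄ < 1 ∧
      (∀ s : AddCircle (1 : ℝ), ⟪γ s, v⟫ ≤ ⟪γ (t₁ : ℝ), v⟫) ∧
      ⟪γ (t₃ : ℝ), v⟫ = ⟪γ (t₁ : ℝ), v⟫ ∧
      (∀ s : AddCircle (1 : ℝ), ⟪γ (t₂ : ℝ), v⟫ ≤ ⟪γ s, v⟫) ∧
      ⟪γ (t₄ : ℝ), v⟫ = ⟪γ (t₂ : ℝ), v⟫ :=
  wienholtz_interleaved_support_general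
    (by rw [← Module.finrank_eq_rank, finrank_euclideanSpace_fin]; exact_mod_cast hd) γ hγ
end

section
/- Let γ : [0,1] → ℝ^m × ℝ^n = ℝ^{m+n} be a continuous rectifiable curve of length L, and let a and b be the lengths of its coordinate projections γ₁ : [0,1] → ℝ^m and γ₂ : [0,1] → ℝ^n (so γ(t) = (γ₁(t), γ₂(t))). Then a² + b² ≤ L². -/
open Set Filter MeasureTheory
open scoped ENNReal NNReal RealInnerProductSpace

/- Each edge of a polygon inscribed in `γ`, of length `ℓ`, projects to edges of lengths `ℓ₁`, `ℓ₂`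
with `ℓ₁² + ℓ₂² = ℓ²`, so by Minkowski's inequality the lengths of the whole polygon and of its
projections satisfy `a² + b² ≤ L²`. Lengths of inscribed polygons increase under refinement, so the
lengths of `γ` and of both projections are limits along the same directed family of vertex sets,
and the inequality passes to the limit. The same argument works for every exponent `p ≥ 1`. -/

theorem ennreal_Lp_add_le_pair (a b c d : ℝ≥0∞) {p : ℝ} (hp : 1 ≤ p) :
    ((a + b) ^ p + (c + d) ^ p) ^ (1 / p) ≤
      (a ^ p + c ^ p) ^ (1 / p) + (b ^ p + d ^ p) ^ (1 / p) := by
  simpa using ENNReal.Lp_add_le Finset.univ ![a, c] ![b, d] hp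

theorem toReal_rpow_add_toReal_rpow_le {x y z : ℝ≥0∞} {r : ℝ} (hr : 0 ≤ r) (hz : z ≠ ⊤)
    (h : x ^ r + y ^ r ≤ z ^ r) : x.toReal ^ r + y.toReal ^ r ≤ z.toReal ^ r := by
  have hzr : z ^ r ≠ ⊤ := ENNReal.rpow_ne_top_of_nonneg hr hz
  obtain ⟨hx, hy⟩ := ENNReal.add_ne_top.1 (ne_top_of_le_ne_top hzr h)
  simpa only [ENNReal.toReal_add hx hy, ENNReal.toReal_rpow] using ENNReal.toReal_mono hzr h

section Variation

open scoped Topology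

variable {α E F G : Type*} [LinearOrder α] [PseudoEMetricSpace E] [PseudoEMetricSpace F]
  [PseudoEMetricSpace G]

theorem eVariationOn_eq_iSup_finset (f : α → E) (s : Set α) :
    eVariationOn f s =
      ⨆ P : Finset s, eVariationOn f (P.map (Function.Embedding.subtype _)) := by
  refine le_antisymm (iSup_le ?_) (iSup_le fun P => eVariationOn.mono f (by simp))
  rintro ⟨n, u, hu, us⟩
  refine le_iSup_of_le ((Finset.range (n + 1)).image fun i => ⟨u i, us i⟩) ?_
  refine eVariationOn.sum_le_of_monotoneOn_Iic (hu.monotoneOn _) fun i hi => ?_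
  simpa [us] using ⟨i, hi, rfl⟩

theorem tendsto_eVariationOn_finset (f : α → E) (s : Set α) :
    Tendsto (fun P : Finset s => eVariationOn f (P.map (Function.Embedding.subtype _)))
      atTop (𝓝 (eVariationOn f s)) := by
  rw [eVariationOn_eq_iSup_finset f s]
  exact tendsto_atTop_iSup fun P Q hPQ =>
    eVariationOn.mono f (Finset.coe_subset.2 (Finset.map_subset_map.2 hPQ))

theorem eVariationOn_insert_of_isGreatest (f : α → E) {s : Set α} {x y : α}
    (hx : IsGreatest s x) (hxy : x ≤ y) :
    eVariationOn f (insert y s) = eVariationOn f s + edist (f x) (f y) := by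
  have hleast : IsLeast {x, y} x := ⟨by simp, by simp [lowerBounds, hxy]⟩
  rw [← eVariationOn.pair f x y, ← eVariationOn.union f hx hleast, Set.union_insert,
    Set.union_singleton, Set.insert_eq_of_mem (Set.mem_insert_of_mem y hx.1)]

variable {f : α → E} {g : α → F} {h : α → G} {p : ℝ}

theorem eVariationOn_rpow_add_rpow_le_of_finset (hp : 1 ≤ p) (P : Finset α)
    (hfgh : ∀ x ∈ P, ∀ y ∈ P,
      edist (f x) (f y) ^ p + edist (g x) (g y) ^ p ≤ edist (h x) (h y) ^ p) :
    eVariationOn f P ^ p + eVariationOn g P ^ p ≤ eVariationOn h P ^ p := by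
  have hp₀ : 0 < p := zero_lt_one.trans_le hp
  induction P using Finset.induction_on_max with
  | empty => simp [hp₀]
  | insert y P hy ih =>
    rcases P.eq_empty_or_nonempty with rfl | hP
    · simp [hp₀, eVariationOn.subsingleton]
    have hx := P.isGreatest_max' hP
    set x := P.max' hP
    have hxy : x ≤ y := (hy x hx.1).le
    have ihP := ih fun z hz w hw =>
      hfgh z (Finset.mem_insert_of_mem hz) w (Finset.mem_insert_of_mem hw)
    have hedge := hfgh x (Finset.mem_insert_of_mem hx.1) y (Finset.mem_insert_self y P)
    simp only [Finset.coe_insert, eVariationOn_insert_of_isGreatest _ hx hxy]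
    rw [← ENNReal.rpow_inv_le_iff hp₀, ← one_div] at ihP hedge ⊢
    exact (ennreal_Lp_add_le_pair _ _ _ _ hp).trans (add_le_add ihP hedge)

theorem eVariationOn_rpow_add_rpow_le (hp : 1 ≤ p) {s : Set α}
    (hfgh : ∀ x ∈ s, ∀ y ∈ s,
      edist (f x) (f y) ^ p + edist (g x) (g y) ^ p ≤ edist (h x) (h y) ^ p) :
    eVariationOn f s ^ p + eVariationOn g s ^ p ≤ eVariationOn h s ^ p := by
  refine le_of_tendsto_of_tendsto'
    (((tendsto_eVariationOn_finset f s).ennrpow_const p).add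
      ((tendsto_eVariationOn_finset g s).ennrpow_const p))
    ((tendsto_eVariationOn_finset h s).ennrpow_const p) fun P => ?_
  refine eVariationOn_rpow_add_rpow_le_of_finset hp _ ?_
  simpa using fun x hx _ y hy _ => hfgh x hx y hy

end Variation

section ArcLength

variable {E F : Type*} [NormedAddCommGroup E] [NormedAddCommGroup F]

theorem ofReal_polyLen (γ : ℝ → E) (m : ℕ) (u : ℕ → ℝ) :
    ENNReal.ofReal (polyLen γ m u) =
      ∑ i ∈ Finset.range m, edist (γ (u (i + 1))) (γ (u i)) := by
  simp only [polyLen, ENNReal.ofReal_sum_of_nonneg fun _ _ => norm_nonneg _, edist_dist,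
    dist_eq_norm]

theorem inscribedIn_iff {a b : ℝ} {m : ℕ} {u : ℕ → ℝ} :
    InscribedIn a b m u ↔ StrictMonoOn u (Iic m) ∧ ∀ i ∈ Iic m, u i ∈ Icc a b := by
  refine and_congr_left' ⟨fun hu => strictMonoOn_Iic_of_lt_succ hu, fun hu i hi => ?_⟩
  exact hu (Set.mem_Iic.2 hi.le) (Set.mem_Iic.2 hi) i.lt_succ_self

theorem arcLen_eq_eVariationOn (γ : ℝ → E) (a b : ℝ) :
    arcLen γ a b = eVariationOn γ (Icc a b) := by
  simp only [arcLen, ofReal_polyLen, inscribedIn_iff, eVariationOn.eVariationOn_eq_strictMonoOn,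
    iSup_sigma, iSup_subtype]

theorem arcLen_comp_isometry {φ : E → F} (hφ : Isometry φ) (γ : ℝ → E) (a b : ℝ) :
    arcLen (φ ∘ γ) a b = arcLen γ a b := by
  simp only [arcLen, ofReal_polyLen, Function.comp_apply, hφ.edist_eq]

theorem projection_lengths_sq_le_general {p : ℝ≥0∞} [Fact (1 ≤ p)] (hp : p ≠ ⊤)
    (γ : ℝ → WithLp p (E × F)) (a b : ℝ) :
    arcLen (fun t => (γ t).fst) a b ^ p.toReal + arcLen (fun t => (γ t).snd) a b ^ p.toReal ≤
      arcLen γ a b ^ p.toReal := by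
  have hp₁ : 1 ≤ p.toReal := by simpa using ENNReal.toReal_mono hp (Fact.out : 1 ≤ p)
  have hp₀ : 0 < p.toReal := zero_lt_one.trans_le hp₁
  have hedist : ∀ s t, edist (γ s).fst (γ t).fst ^ p.toReal +
      edist (γ s).snd (γ t).snd ^ p.toReal = edist (γ s) (γ t) ^ p.toReal := fun s t => by
    rw [WithLp.prod_edist_eq_add hp₀, one_div, ENNReal.rpow_inv_rpow hp₀.ne']
  simpa only [arcLen_eq_eVariationOn] using
    eVariationOn_rpow_add_rpow_le hp₁ fun s _ t _ => (hedist s t).le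

end ArcLength

/-- The splitting `ℝᵐ⁺ⁿ = ℝᵐ × ℝⁿ` of Euclidean space into its first `m` and last `n` coordinates,
as a linear isometry onto the `L²` product. -/
noncomputable def euclideanSpaceFinAddEquivProd (m n : ℕ) :
    EuclideanSpace ℝ (Fin (m + n)) ≃ₗᵢ[ℝ]
      WithLp 2 (EuclideanSpace ℝ (Fin m) × EuclideanSpace ℝ (Fin n)) :=
  (LinearIsometryEquiv.piLpCongrLeft 2 ℝ ℝ finSumFinEquiv.symm).trans
    (PiLp.sumPiLpEquivProdLpPiLp 2 fun _ => ℝ)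

/-- if a continuous rectifiable curve `γ : [0,1] → ℝᵐ × ℝⁿ` has length `L`
and its coordinate projections to `ℝᵐ` and `ℝⁿ` have lengths `a` and `b`, then
`a² + b² ≤ L²`. -/
theorem projection_lengths_sq_le (m n : ℕ) (γ : ℝ → EuclideanSpace ℝ (Fin (m + n)))
    (hγ : ContinuousOn γ (Set.Icc 0 1)) (hrect : arcLen γ 0 1 ≠ ⊤) :
    (arcLen (fun t => (EuclideanSpace.equiv (Fin m) ℝ).symm fun i =>
        γ t (Fin.castAdd n i)) 0 1).toReal ^ 2 +
      (arcLen (fun t => (EuclideanSpace.equiv (Fin n) ℝ).symm fun i =>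
        γ t (Fin.natAdd m i)) 0 1).toReal ^ 2 ≤
      (arcLen γ 0 1).toReal ^ 2 := by
  let e := euclideanSpaceFinAddEquivProd m n
  have hsplit := projection_lengths_sq_le_general ENNReal.ofNat_ne_top (e ∘ γ) 0 1
  rw [arcLen_comp_isometry e.isometry] at hsplit
  exact mod_cast toReal_rpow_add_toReal_rpow_le ENNReal.toReal_nonneg hrect hsplit
end

section
/- Let γ : ℝ/ℤ → ℝ^d be a nonconstant continuous closed curve of finite length L, and suppose p₁ = γ(s₁) and p₂ = γ(s₂) realize the diameter of γ, i.e. ‖p₁ − p₂‖ = sup_{s,t} ‖γ(s) − γ(t)‖. Let Π : ℝ^d → ℝ^d denote the orthogonal projection onto the hyperplane through the origin orthogonal to p₁ − p₂. Then the projected curve Π ∘ γ has diameter at most L/(2√2): sup_{s,t} ‖Π(γ(s)) − Π(γ(t))‖ ≤ L/(2√2). This estimate is sharp for a square. -/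
open Set Filter MeasureTheory
open scoped ENNReal NNReal RealInnerProductSpace

open scoped RealInnerProductSpace

/-- Orthogonal projection of `x` onto the hyperplane through the origin orthogonal to
the (nonzero) vector `w`: with `u := w/‖w‖`, it is `x - ⟨x,u⟩·u`. -/
noncomputable def projHyperplane {E : Type*} [NormedAddCommGroup E]
    [InnerProductSpace ℝ E] (w x : E) : E :=
  x - ⟪x, ‖w‖⁻¹ • w⟫ • (‖w‖⁻¹ • w)

/-!
Split every edge of an inscribed closed polygon into its components along `w = p₁ - p₂` and
orthogonal to `w`. Since `‖v∥‖ + ‖v⊥‖ ≤ √2 ‖v‖`, the lengths of the two projected closed polygons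
add up to at most `√2 L`. A closed polygon is at least twice as long as the distance between any
two of its vertices, so if the polygon passes through `p₁`, `p₂`, `γ s` and `γ t`, its projection
along `w` has length at least `2 ‖w‖` and its projection orthogonal to `w` has length at least
`2 ρ`, where `ρ = ‖Π (γ s) - Π (γ t)‖`. As `ρ ≤ ‖γ s - γ t‖ ≤ ‖w‖`, we get
`4 ρ ≤ 2 ‖w‖ + 2 ρ ≤ √2 L`.
-/

section LenList

variable {E F G : Type*} [NormedAddCommGroup E] [NormedAddCommGroup F] [NormedAddCommGroup G]

lemma lenList_cons_cons (a b : E) (l : List E) :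
    lenList (a :: b :: l) = ‖b - a‖ + lenList (b :: l) :=
  rfl

lemma norm_sub_le_lenList (a b : E) (l : List E) : ‖b - a‖ ≤ lenList (a :: (l ++ [b])) := by
  induction l generalizing a with
  | nil => simp [lenList]
  | cons c l ih =>
    rw [List.cons_append, lenList_cons_cons]
    linarith [ih c, norm_sub_le_norm_sub_add_norm_sub b c a]

lemma norm_sub_add_norm_sub_le_lenList {a b x : E} {l : List E} (hx : x ∈ l) :
    ‖x - a‖ + ‖b - x‖ ≤ lenList (a :: (l ++ [b])) := by
  induction l generalizing a with
  | nil => simp at hx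
  | cons c l ih =>
    rw [List.cons_append, lenList_cons_cons]
    rcases List.mem_cons.1 hx with rfl | hx
    · gcongr
      exact norm_sub_le_lenList x b l
    · linarith [ih (a := c) hx, norm_sub_le_norm_sub_add_norm_sub x c a]

lemma two_mul_norm_sub_le_lenList_add {a b x y : E} {l : List E} (hx : x ∈ a :: l)
    (hy : y ∈ a :: l) : 2 * ‖x - y‖ ≤ lenList (a :: (l ++ [b])) + ‖b - a‖ := by
  induction l generalizing a with
  | nil =>
    obtain rfl : x = a := by simpa using hx
    obtain rfl : y = x := by simpa using hy
    simp [lenList]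
  | cons c l ih =>
    have via_start {z : E} (hz : z ∈ c :: l) :
        2 * ‖z - a‖ ≤ lenList (a :: (c :: l ++ [b])) + ‖b - a‖ := by
      linarith [norm_sub_add_norm_sub_le_lenList (a := a) (b := b) hz,
        norm_sub_le_norm_sub_add_norm_sub z b a, norm_sub_rev z b]
    rcases List.mem_cons.1 hx with rfl | hx' <;> rcases List.mem_cons.1 hy with rfl | hy'
    · simpa using (by positivity : 0 ≤ 2 * ‖c - y‖).trans (via_start List.mem_cons_self)
    · rw [norm_sub_rev]
      exact via_start hy'
    · exact via_start hx'
    · rw [List.cons_append, lenList_cons_cons]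
      linarith [ih hx' hy', norm_sub_le_norm_sub_add_norm_sub b a c, norm_sub_rev a c]

lemma two_mul_norm_sub_le_lenList {x y : E} {l : List E} (hx : x ∈ l) (hy : y ∈ l) :
    2 * ‖x - y‖ ≤ lenList (l ++ l.take 1) := by
  cases l with
  | nil => simp at hx
  | cons a l => simpa using two_mul_norm_sub_le_lenList_add (b := a) hx hy

lemma lenList_map_add_lenList_map_le {f : E → F} {g : E → G} {C : ℝ}
    (hfg : ∀ x y, ‖f x - f y‖ + ‖g x - g y‖ ≤ C * ‖x - y‖) :
    ∀ l : List E, lenList (l.map f) + lenList (l.map g) ≤ C * lenList l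
  | [] => by simp [lenList]
  | [_] => by simp [lenList]
  | a :: b :: l => by
    have ih := lenList_map_add_lenList_map_le hfg (b :: l)
    simp only [List.map_cons, lenList_cons_cons, mul_add] at ih ⊢
    linarith [hfg b a]

end LenList

section LoopPolygon

lemma loopPolyLen_comp {X F : Type*} [NormedAddCommGroup F] (γ : AddCircle (1 : ℝ) → X)
    (f : X → F) (m : ℕ) (u : ℕ → ℝ) :
    loopPolyLen (f ∘ γ) m u =
      lenList ((loopVertexList γ m u ++ (loopVertexList γ m u).take 1).map f) := by
  simp only [loopPolyLen, loopVertexList, List.map_append, List.map_take, List.map_map,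
    Function.comp_def]

variable {E F G : Type*} [NormedAddCommGroup E] [NormedAddCommGroup F] [NormedAddCommGroup G]
  (γ : AddCircle (1 : ℝ) → E) {m : ℕ} {u : ℕ → ℝ}

lemma two_mul_norm_sub_le_loopPolyLen {i j : ℕ} (hi : i ≤ m) (hj : j ≤ m) :
    2 * ‖γ (u i) - γ (u j)‖ ≤ loopPolyLen γ m u := by
  have mem_vertices {k : ℕ} (hk : k ≤ m) : γ (u k) ∈ loopVertexList γ m u :=
    List.mem_map_of_mem (List.mem_range.2 (Nat.lt_succ_of_le hk))
  exact two_mul_norm_sub_le_lenList (mem_vertices hi) (mem_vertices hj)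

lemma loopPolyLen_comp_add_loopPolyLen_comp_le {f : E → F} {g : E → G} {C : ℝ}
    (hfg : ∀ x y, ‖f x - f y‖ + ‖g x - g y‖ ≤ C * ‖x - y‖) (m : ℕ) (u : ℕ → ℝ) :
    loopPolyLen (f ∘ γ) m u + loopPolyLen (g ∘ γ) m u ≤ C * loopPolyLen γ m u := by
  rw [loopPolyLen_comp, loopPolyLen_comp]
  exact lenList_map_add_lenList_map_le hfg _

lemma loopPolyLen_le_toReal_loopLen (hfin : loopLen γ ≠ ⊤) (hu : LoopInscribed m u) :
    loopPolyLen γ m u ≤ (loopLen γ).toReal :=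
  (ENNReal.ofReal_le_iff_le_toReal hfin).1 <|
    le_iSup_of_le m <| le_iSup_of_le u <| le_iSup_of_le hu le_rfl

lemma exists_loopInscribed_of_finset {T : Finset ℝ} (hT : T.Nonempty)
    (hT_Ico : ∀ x ∈ T, x ∈ Set.Ico (0 : ℝ) 1) :
    ∃ m u, LoopInscribed m u ∧ ∀ x ∈ T, ∃ i ≤ m, u i = x := by
  obtain ⟨m, hm⟩ : ∃ m, T.card = m + 1 := Nat.exists_eq_succ_of_ne_zero hT.card_ne_zero
  let e := T.orderEmbOfFin hm
  refine ⟨m, fun i => e (Fin.ofNat (m + 1) i), ⟨fun i hi => e.strictMono ?_, fun i _ =>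
    hT_Ico _ (T.orderEmbOfFin_mem hm _)⟩, fun x hx => ?_⟩
  · rw [Fin.lt_def, Fin.val_ofNat, Fin.val_ofNat, Nat.mod_eq_of_lt (by lia),
      Nat.mod_eq_of_lt (by lia)]
    exact i.lt_succ_self
  · obtain ⟨i, rfl⟩ : x ∈ Set.range e := by rwa [T.range_orderEmbOfFin hm]
    exact ⟨i, i.is_le, by simp⟩

lemma exists_loopInscribed_through {S : Finset (AddCircle (1 : ℝ))} (hS : S.Nonempty) :
    ∃ m u, LoopInscribed m u ∧ ∀ s ∈ S, ∃ i ≤ m, (u i : AddCircle (1 : ℝ)) = s := by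
  let rep (s : AddCircle (1 : ℝ)) : ℝ := AddCircle.equivIco 1 0 s
  have rep_mem (s : AddCircle (1 : ℝ)) : rep s ∈ Set.Ico (0 : ℝ) 1 := by
    simpa only [zero_add] using (AddCircle.equivIco 1 0 s).2
  obtain ⟨m, u, hu, hvisit⟩ := exists_loopInscribed_of_finset (T := S.image rep) (hS.image rep)
    (by simpa only [Finset.forall_mem_image] using fun s _ => rep_mem s)
  refine ⟨m, u, hu, fun s hs => ?_⟩
  obtain ⟨i, hi, hui⟩ := hvisit (rep s) (Finset.mem_image_of_mem rep hs)
  exact ⟨i, hi, hui ▸ AddCircle.coe_equivIco⟩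

end LoopPolygon

section Projection

variable {E : Type*} [NormedAddCommGroup E] [InnerProductSpace ℝ E]

lemma norm_starProjection_add_norm_starProjection_orthogonal_le (K : Submodule ℝ E)
    [K.HasOrthogonalProjection] (v : E) :
    ‖K.starProjection v‖ + ‖Kᗮ.starProjection v‖ ≤ √2 * ‖v‖ := by
  refine abs_le_of_sq_le_sq' ?_ (by positivity) |>.2
  calc (‖K.starProjection v‖ + ‖Kᗮ.starProjection v‖) ^ 2
      ≤ 2 * (‖K.starProjection v‖ ^ 2 + ‖Kᗮ.starProjection v‖ ^ 2) := add_sq_le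
    _ = (√2 * ‖v‖) ^ 2 := by
      rw [← K.norm_sq_eq_add_norm_sq_starProjection, mul_pow, Real.sq_sqrt zero_le_two]

theorem two_mul_norm_starProjection_add_le_sqrt_two_mul_loopLen {γ : AddCircle (1 : ℝ) → E}
    (hfin : loopLen γ ≠ ⊤) (K : Submodule ℝ E) [K.HasOrthogonalProjection]
    (p q r s : AddCircle (1 : ℝ)) :
    2 * ‖K.starProjection (γ p - γ q)‖ + 2 * ‖Kᗮ.starProjection (γ r - γ s)‖ ≤
      √2 * (loopLen γ).toReal := by
  classical
  obtain ⟨m, u, hu, hvisit⟩ := exists_loopInscribed_through (S := {p, q, r, s}) (by simp)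
  obtain ⟨i, hi, rfl⟩ := hvisit p (by simp)
  obtain ⟨j, hj, rfl⟩ := hvisit q (by simp)
  obtain ⟨k, hk, rfl⟩ := hvisit r (by simp)
  obtain ⟨l, hl, rfl⟩ := hvisit s (by simp)
  rw [map_sub, map_sub]
  calc 2 * ‖K.starProjection (γ (u i)) - K.starProjection (γ (u j))‖ +
        2 * ‖Kᗮ.starProjection (γ (u k)) - Kᗮ.starProjection (γ (u l))‖
      ≤ loopPolyLen (K.starProjection ∘ γ) m u + loopPolyLen (Kᗮ.starProjection ∘ γ) m u :=
        add_le_add (two_mul_norm_sub_le_loopPolyLen (K.starProjection ∘ γ) hi hj)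
          (two_mul_norm_sub_le_loopPolyLen (Kᗮ.starProjection ∘ γ) hk hl)
    _ ≤ √2 * loopPolyLen γ m u := by
        refine loopPolyLen_comp_add_loopPolyLen_comp_le γ (fun x y => ?_) m u
        simpa only [map_sub] using
          norm_starProjection_add_norm_starProjection_orthogonal_le K (x - y)
    _ ≤ √2 * (loopLen γ).toReal := by
        gcongr
        exact loopPolyLen_le_toReal_loopLen γ hfin hu

lemma projHyperplane_eq_starProjection (w x : E) :
    projHyperplane w x = (ℝ ∙ w)ᗮ.starProjection x := by
  rw [projHyperplane, Submodule.starProjection_orthogonal_val, Submodule.starProjection_singleton,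
    inner_smul_right, smul_smul, real_inner_comm]
  congr 2
  simp only [RCLike.ofReal_real_eq_id, id_eq]
  ring

theorem projection_diameter_le_general {γ : AddCircle (1 : ℝ) → E} (hfin : loopLen γ ≠ ⊤)
    {s₁ s₂ s t : AddCircle (1 : ℝ)} (hst : ‖γ s - γ t‖ ≤ ‖γ s₁ - γ s₂‖) :
    ‖projHyperplane (γ s₁ - γ s₂) (γ s) - projHyperplane (γ s₁ - γ s₂) (γ t)‖ ≤
      (loopLen γ).toReal / (2 * √2) := by
  set w := γ s₁ - γ s₂
  rw [projHyperplane_eq_starProjection, projHyperplane_eq_starProjection, ← map_sub]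
  set ρ := ‖(ℝ ∙ w)ᗮ.starProjection (γ s - γ t)‖
  have hρ : ρ ≤ ‖w‖ := ((ℝ ∙ w)ᗮ.norm_starProjection_apply_le _).trans hst
  have hw : (ℝ ∙ w).starProjection (γ s₁ - γ s₂) = w :=
    Submodule.starProjection_eq_self_iff.2 (Submodule.mem_span_singleton_self w)
  have hL : 2 * ‖w‖ + 2 * ρ ≤ √2 * (loopLen γ).toReal := by
    rw [← hw]
    exact two_mul_norm_starProjection_add_le_sqrt_two_mul_loopLen hfin (ℝ ∙ w) s₁ s₂ s t
  rw [le_div_iff₀ (by positivity)]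
  refine le_of_mul_le_mul_left ?_ (Real.sqrt_pos.2 zero_lt_two)
  calc √2 * (ρ * (2 * √2)) = 4 * ρ := by linear_combination 2 * ρ * Real.sq_sqrt zero_le_two
    _ ≤ √2 * (loopLen γ).toReal := by linarith

end Projection

/-- Wienholtz: if `p₁ = γ s₁`, `p₂ = γ s₂` realize the diameter of a
nonconstant closed curve `γ` of finite length `L` in `ℝᵈ`, then the orthogonal
projection of `γ` to the hyperplane orthogonal to `p₁ - p₂` has diameter at most
`L/(2√2)` (an estimate that is sharp for a square). -/
theorem projection_diameter_le (d : ℕ) (γ : AddCircle (1 : ℝ) → EuclideanSpace ℝ (Fin d))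
    (hγ : Continuous γ) (hnc : ∃ a b, γ a ≠ γ b) (hfin : loopLen γ ≠ ⊤)
    (s₁ s₂ : AddCircle (1 : ℝ))
    (hdiam : ∀ s t : AddCircle (1 : ℝ), ‖γ s - γ t‖ ≤ ‖γ s₁ - γ s₂‖) :
    ∀ s t : AddCircle (1 : ℝ),
      ‖projHyperplane (γ s₁ - γ s₂) (γ s) - projHyperplane (γ s₁ - γ s₂) (γ t)‖ ≤
        (loopLen γ).toReal / (2 * Real.sqrt 2) :=
  fun s t => projection_diameter_le_general hfin (hdiam s t)
end
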